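/- Assume (A1′) and (A2)–(A4), with Lipschitz constant E₁ ∈ (0,1), and set a = sup_{t∈ℤ}‖G(t,0,0)‖ and b = sup_{t∈ℤ}‖Q(t,0)‖. Suppose M₀ > 0 satisfies E₁M₀ + b + [(‖A‖+1)(E₁M₀ + b) + 2E₂M₀ + a]·[β₁(1+α₁)/α₁ + β₂/α₂] ≤ M₀, where ‖A‖ = sup_{t∈ℤ}|A(t)|. Then there exists a discrete almost periodic function x : ℤ → ℝⁿ with sup_{t∈ℤ}‖x(t)‖ ≤ M₀ satisfying, for every t ∈ ℤ, x(t) = Q(t, x(t−g(t))) + ∑_{j=-∞}^{t−1} X(t)P X(j+1)⁻¹ Λ(j,x) − ∑_{j=t}^{∞} X(t)(I−P) X(j+1)⁻¹ Λ(j,x), where Λ(j,x) = (A(j)−I)Q(j, x(j−g(j))) + G(j, x(j), x(j−g(j))); i.e., the neutral system x(t+1) = A(t)x(t) + ΔQ(t, x(t−g(t))) + G(t, x(t), x(t−g(t))) has an almost periodic solution with sup norm at most M₀. -/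

import Mathlib

/-- A function `f : ℤ → 𝕏` is discrete almost periodic if for every `ε > 0` the set of
`ε`-translation numbers `{τ : ‖f(t+τ) − f(t)‖ < ε for all t}` is relatively dense in `ℤ`:
there is a positive integer `l` such that every interval of `l` consecutive integers
contains such a `τ`. -/
def DiscreteAlmostPeriodic {𝕏 : Type*} [SeminormedAddGroup 𝕏] (f : ℤ → 𝕏) : Prop :=
  ∀ ε : ℝ, 0 < ε → ∃ l : ℕ, 0 < l ∧ ∀ a : ℤ, ∃ τ : ℤ, a ≤ τ ∧ τ < a + l ∧
    ∀ t : ℤ, ‖f (t + τ) - f t‖ < ε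

/-- `Λ(j,x) = (A(j) − I) Q(j, x(j − g(j))) + G(j, x(j), x(j − g(j)))`. -/
noncomputable def Lam {n : ℕ} (A : ℤ → (Fin n → ℝ) →L[ℝ] (Fin n → ℝ))
    (g : ℤ → ℤ) (Q : ℤ → (Fin n → ℝ) → Fin n → ℝ)
    (G : ℤ → (Fin n → ℝ) → (Fin n → ℝ) → Fin n → ℝ)
    (x : ℤ → Fin n → ℝ) (j : ℤ) : Fin n → ℝ :=
  (A j - 1) (Q j (x (j - g j))) + G j (x j) (x (j - g j))

/-!
The equation for `x` is a fixed point equation on the Banach space `𝒜𝒫(E)`, for any Banach space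
`E`: its right-hand side is Lipschitz, and the smallness condition on `M₀` yields a fixed point of
norm at most `M₀`.

That the right-hand side maps `𝒜𝒫(E)` to itself rests on two facts. Almost periodicity of `f` means
that the translates of `f` fall into finitely many classes of small diameter, for every prescribed
diameter; intersecting such partitions gives common translation numbers for several functions. The
dichotomous part sends a bounded `h` to the unique bounded solution `w` of
`w (t + 1) = A t (w t) + h t`; for a common translation number `τ` of `A` and `h`, the difference
`w (t + τ) - w t` is the bounded solution for a forcing term that is uniformly small, hence is small
itself.
-/

open Filter Topology Set
open scoped NNReal BoundedContinuousFunction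

/-- A set of integers with bounded gaps: some fixed number of consecutive integers always contains
one of its elements. -/
def IsRelativelyDense (S : Set ℤ) : Prop :=
  ∃ l : ℕ, 0 < l ∧ ∀ a : ℤ, ∃ τ : ℤ, a ≤ τ ∧ τ < a + l ∧ τ ∈ S

/-- The set `E(ε, f)` of `ε`-translation numbers of `f`. -/
def translationNumbers {X : Type*} [SeminormedAddGroup X] (f : ℤ → X) (ε : ℝ) : Set ℤ :=
  {τ | ∀ t, ‖f (t + τ) - f t‖ < ε}

lemma IsRelativelyDense.mono {S T : Set ℤ} (hS : IsRelativelyDense S) (hST : S ⊆ T) :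
    IsRelativelyDense T :=
  hS.imp fun _ ⟨hl, hdense⟩ => ⟨hl, fun a => (hdense a).imp fun _ ⟨hle, hlt, hτ⟩ =>
    ⟨hle, hlt, hST hτ⟩⟩

namespace DiscreteAlmostPeriodic

section Closure

variable {X Y : Type*} [SeminormedAddCommGroup X] [SeminormedAddCommGroup Y]

lemma isRelativelyDense {f : ℤ → X} (hf : DiscreteAlmostPeriodic f) {ε : ℝ} (hε : 0 < ε) :
    IsRelativelyDense (translationNumbers f ε) :=
  hf ε hε

lemma const (c : X) : DiscreteAlmostPeriodic fun _ : ℤ => c := fun _ hε =>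
  ⟨1, one_pos, fun a => ⟨a, le_rfl, by simp, by simpa using hε⟩⟩

-- The colour of `a` is `a - τ ∈ [0, l)`, where `τ` is a translation number in `(a - l, a]`.
lemma exists_finite_coloring {f : ℤ → X} (hf : DiscreteAlmostPeriodic f) {ε : ℝ} (hε : 0 < ε) :
    ∃ (l : ℕ) (c : ℤ → Fin l), ∀ a b, c a = c b → ∀ t, ‖f (t + a) - f (t + b)‖ < ε := by
  obtain ⟨l, -, hdense⟩ := hf (ε / 2) (half_pos hε)
  choose τ hle hlt hτ using fun a : ℤ => hdense (a - l + 1)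
  refine ⟨l, fun a => ⟨(a - τ a).toNat, by have := hle a; have := hlt a; omega⟩,
    fun a b hab t => ?_⟩
  have hrep : a - τ a = b - τ b := by
    have := hlt a
    have := hlt b
    have := Fin.mk.inj hab
    omega
  have ha := hτ a (t + (a - τ a))
  have hb := hτ b (t + (a - τ a))
  rw [show t + (a - τ a) + τ a = t + a by ring] at ha
  rw [show t + (a - τ a) + τ b = t + b by rw [hrep]; ring, norm_sub_rev] at hb
  calc ‖f (t + a) - f (t + b)‖
      ≤ ‖f (t + a) - f (t + (a - τ a))‖ + ‖f (t + (a - τ a)) - f (t + b)‖ :=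
        norm_sub_le_norm_sub_add_norm_sub ..
    _ < ε := by linarith

lemma of_finite_coloring {f : ℤ → X}
    (h : ∀ ε > 0, ∃ (κ : Type*) (_ : Finite κ) (c : ℤ → κ),
      ∀ a b, c a = c b → ∀ t, ‖f (t + a) - f (t + b)‖ < ε) :
    DiscreteAlmostPeriodic f := by
  intro ε hε
  obtain ⟨κ, _, c, hc⟩ := h ε hε
  let rep : κ → ℤ := Function.invFun c
  obtain ⟨N, hN⟩ : ∃ N : ℕ, ∀ i, (rep i).natAbs ≤ N :=
    (Set.finite_range fun i => (rep i).natAbs).bddAbove.imp fun _ hN i => hN ⟨i, rfl⟩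
  refine ⟨2 * N + 1, by omega, fun a => ⟨a + N - rep (c (a + N)), ?_, ?_, fun t => ?_⟩⟩
  · have := hN (c (a + N)); omega
  · have := hN (c (a + N)); omega
  have hcol : c (a + N) = c (rep (c (a + N))) := (Function.invFun_eq ⟨a + N, rfl⟩).symm
  have := hc _ _ hcol (t - rep (c (a + N)))
  rwa [sub_add_cancel, sub_add_eq_add_sub, ← add_sub_assoc] at *

lemma prodMk {f : ℤ → X} {g : ℤ → Y} (hf : DiscreteAlmostPeriodic f)
    (hg : DiscreteAlmostPeriodic g) : DiscreteAlmostPeriodic fun t => (f t, g t) := by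
  refine of_finite_coloring fun ε hε => ?_
  obtain ⟨k, c, hc⟩ := hf.exists_finite_coloring hε
  obtain ⟨l, d, hd⟩ := hg.exists_finite_coloring hε
  refine ⟨Fin k × Fin l, inferInstance, fun a => (c a, d a), fun a b hab t => ?_⟩
  obtain ⟨hcab, hdab⟩ := Prod.mk.inj hab
  exact max_lt (hc a b hcab t) (hd a b hdab t)

lemma pi {ι : Type*} [Fintype ι] {f : ℤ → ι → X}
    (hf : ∀ i, DiscreteAlmostPeriodic fun t => f t i) : DiscreteAlmostPeriodic f := by
  refine of_finite_coloring fun ε hε => ?_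
  choose l c hc using fun i => (hf i).exists_finite_coloring hε
  refine ⟨∀ i, Fin (l i), inferInstance, fun a i => c i a, fun a b hab t => ?_⟩
  exact (pi_norm_lt_iff hε).2 fun i => hc i a b (congrFun hab i) t

lemma isRelativelyDense_inter {f : ℤ → X} {g : ℤ → Y} (hf : DiscreteAlmostPeriodic f)
    (hg : DiscreteAlmostPeriodic g) {ε : ℝ} (hε : 0 < ε) :
    IsRelativelyDense (translationNumbers f ε ∩ translationNumbers g ε) :=
  ((hf.prodMk hg).isRelativelyDense hε).mono fun _ hτ =>
    ⟨fun t => (norm_fst_le _).trans_lt (hτ t), fun t => (norm_snd_le _).trans_lt (hτ t)⟩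

lemma uniformContinuous_comp {φ : X → Y} {f : ℤ → X} (hφ : UniformContinuous φ)
    (hf : DiscreteAlmostPeriodic f) : DiscreteAlmostPeriodic fun t => φ (f t) := by
  intro ε hε
  obtain ⟨δ, hδ, hφδ⟩ := Metric.uniformContinuous_iff.1 hφ ε hε
  refine (hf.isRelativelyDense hδ).mono fun τ hτ t => ?_
  rw [← dist_eq_norm]
  exact hφδ ((dist_eq_norm _ _).trans_lt (hτ t))

lemma totallyBounded_range {f : ℤ → X} (hf : DiscreteAlmostPeriodic f) :
    TotallyBounded (range f) := by
  refine Metric.totallyBounded_iff.2 fun ε hε => ?_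
  obtain ⟨l, -, hdense⟩ := hf ε hε
  refine ⟨f '' Icc 0 (l : ℤ), (Set.finite_Icc _ _).image f, ?_⟩
  rintro _ ⟨t, rfl⟩
  obtain ⟨τ, hle, hlt, hτ⟩ := hdense (-t)
  refine mem_iUnion₂.2 ⟨f (t + τ), mem_image_of_mem f ⟨by omega, by omega⟩, ?_⟩
  rw [Metric.mem_ball', dist_eq_norm]
  exact hτ t

lemma bddAbove_range_norm {f : ℤ → X} (hf : DiscreteAlmostPeriodic f) :
    BddAbove (range fun t => ‖f t‖) := by
  obtain ⟨C, hC⟩ := hf.totallyBounded_range.isBounded.exists_norm_le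
  exact ⟨C, forall_mem_range.2 fun t => hC _ (mem_range_self t)⟩

lemma exists_norm_le {f : ℤ → X} (hf : DiscreteAlmostPeriodic f) : ∃ C, ∀ t, ‖f t‖ ≤ C :=
  hf.bddAbove_range_norm.imp fun _ hC t => hC ⟨t, rfl⟩

lemma of_uniform_approx {f : ℤ → X}
    (h : ∀ ε > 0, ∃ k : ℤ → X, DiscreteAlmostPeriodic k ∧ ∀ t, ‖f t - k t‖ < ε) :
    DiscreteAlmostPeriodic f := by
  intro ε hε
  obtain ⟨k, hk, hfk⟩ := h (ε / 3) (by positivity)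
  refine (hk.isRelativelyDense (ε := ε / 3) (by positivity)).mono fun τ hτ t => ?_
  have h₁ := hfk (t + τ)
  have h₂ := hτ t
  have h₃ := hfk t
  rw [← dist_eq_norm] at *
  rw [dist_comm] at h₃
  exact (dist_triangle4 _ (k (t + τ)) (k t) _).trans_lt (by linarith)

/-- A finite net in the range of `y` turns pointwise almost periodicity of `F` into almost
periodicity uniform over that range. -/
lemma comp_of_uniformEquicontinuous {F : ℤ → X → Y} {y : ℤ → X}
    (hF : UniformEquicontinuous F) (hF_ap : ∀ u, DiscreteAlmostPeriodic fun t => F t u)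
    (hy : DiscreteAlmostPeriodic y) : DiscreteAlmostPeriodic fun t => F t (y t) := by
  intro ε hε
  obtain ⟨δ, hδ, hFδ⟩ := Metric.uniformEquicontinuous_iff.1 hF (ε / 4) (by positivity)
  obtain ⟨s, hs, hnet⟩ := Metric.totallyBounded_iff.1 hy.totallyBounded_range δ hδ
  have := hs.fintype
  have hF_net : DiscreteAlmostPeriodic fun t (v : s) => F t v := pi fun v => hF_ap v
  refine (hy.isRelativelyDense_inter hF_net (ε := min δ (ε / 4)) (by positivity)).mono ?_
  rintro τ ⟨hτy, hτF⟩ t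
  obtain ⟨v, hvs, hv⟩ := mem_iUnion₂.1 (hnet (mem_range_self t))
  have h₁ : dist (F (t + τ) (y (t + τ))) (F (t + τ) (y t)) < ε / 4 :=
    hFδ _ _ ((dist_eq_norm _ _).trans_lt ((hτy t).trans_le (min_le_left _ _))) _
  have h₂ : dist (F (t + τ) (y t)) (F (t + τ) v) < ε / 4 := hFδ _ _ hv _
  have h₃ : dist (F (t + τ) v) (F t v) < ε / 4 := by
    rw [dist_eq_norm]
    exact (norm_le_pi_norm _ (⟨v, hvs⟩ : s)).trans_lt ((hτF t).trans_le (min_le_right _ _))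
  have h₄ : dist (F t v) (F t (y t)) < ε / 4 := hFδ _ _ (dist_comm v (y t) ▸ hv) _
  rw [← dist_eq_norm]
  linarith [dist_triangle (F (t + τ) (y (t + τ))) (F (t + τ) (y t)) (F t (y t)),
    dist_triangle4 (F (t + τ) (y t)) (F (t + τ) v) (F t v) (F t (y t))]

lemma comp_of_lipschitzWith {F : ℤ → X → Y} {K : ℝ≥0} {y : ℤ → X}
    (hF : ∀ t, LipschitzWith K (F t)) (hF_ap : ∀ u, DiscreteAlmostPeriodic fun t => F t u)
    (hy : DiscreteAlmostPeriodic y) : DiscreteAlmostPeriodic fun t => F t (y t) :=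
  comp_of_uniformEquicontinuous (LipschitzWith.uniformEquicontinuous F K hF) hF_ap hy

lemma add {f g : ℤ → X} (hf : DiscreteAlmostPeriodic f) (hg : DiscreteAlmostPeriodic g) :
    DiscreteAlmostPeriodic fun t => f t + g t :=
  uniformContinuous_comp uniformContinuous_add (hf.prodMk hg)

lemma neg {f : ℤ → X} (hf : DiscreteAlmostPeriodic f) : DiscreteAlmostPeriodic fun t => -f t :=
  uniformContinuous_comp uniformContinuous_neg hf

lemma sub {f g : ℤ → X} (hf : DiscreteAlmostPeriodic f) (hg : DiscreteAlmostPeriodic g) :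
    DiscreteAlmostPeriodic fun t => f t - g t :=
  uniformContinuous_comp uniformContinuous_sub (hf.prodMk hg)

-- A translation number of `g` below `1` is an exact period, because `g` is integer valued.
lemma comp_sub_delay {f : ℤ → X} {g : ℤ → ℤ} (hf : DiscreteAlmostPeriodic f)
    (hg : DiscreteAlmostPeriodic g) : DiscreteAlmostPeriodic fun t => f (t - g t) := by
  intro ε hε
  refine (hf.isRelativelyDense_inter hg (ε := min ε 1) (by positivity)).mono ?_
  rintro τ ⟨hτf, hτg⟩ t
  have hgτ : g (t + τ) = g t := by
    by_contra hne
    have hlt : dist (g (t + τ)) (g t) < 1 :=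
      (dist_eq_norm _ _).trans_lt ((hτg t).trans_le (min_le_right _ _))
    exact hlt.not_ge (Int.pairwise_one_le_dist hne)
  have hshift : t + τ - g (t + τ) = t - g t + τ := by rw [hgτ]; ring
  beta_reduce
  rw [hshift]
  exact (hτf (t - g t)).trans_le (min_le_left _ _)

lemma comp_delay {Q : ℤ → X → Y} {g : ℤ → ℤ} {x : ℤ → X} {C : ℝ} (hx : DiscreteAlmostPeriodic x)
    (hg : DiscreteAlmostPeriodic g) (hQ : ∀ u, DiscreteAlmostPeriodic fun t => Q t u)
    (hQ_lip : ∀ t u v, ‖Q t u - Q t v‖ ≤ C * ‖u - v‖) :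
    DiscreteAlmostPeriodic fun t => Q t (x (t - g t)) :=
  comp_of_lipschitzWith (fun t => .of_dist_le' fun u v => by
    simpa only [dist_eq_norm] using hQ_lip t u v) hQ (hx.comp_sub_delay hg)

lemma comp_delay₂ {G : ℤ → X → X → Y} {g : ℤ → ℤ} {x : ℤ → X} {C : ℝ}
    (hx : DiscreteAlmostPeriodic x) (hg : DiscreteAlmostPeriodic g)
    (hG : ∀ u v, DiscreteAlmostPeriodic fun t => G t u v) (hC : 0 ≤ C)
    (hG_lip : ∀ t u v w z, ‖G t u w - G t v z‖ ≤ C * (‖u - v‖ + ‖w - z‖)) :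
    DiscreteAlmostPeriodic fun t => G t (x t) (x (t - g t)) := by
  have hlip (t : ℤ) : LipschitzWith (2 * C).toNNReal fun p : X × X => G t p.1 p.2 := by
    refine .of_dist_le' fun p q => ?_
    rw [dist_eq_norm, dist_eq_norm]
    calc ‖G t p.1 p.2 - G t q.1 q.2‖ ≤ C * (‖(p - q).1‖ + ‖(p - q).2‖) := hG_lip t _ _ _ _
      _ ≤ C * (‖p - q‖ + ‖p - q‖) := by
        gcongr
        · exact norm_fst_le _
        · exact norm_snd_le _
      _ = 2 * C * ‖p - q‖ := by ring
  exact comp_of_lipschitzWith (F := fun t (p : X × X) => G t p.1 p.2) hlip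
    (fun p => hG p.1 p.2) (hx.prodMk (hx.comp_sub_delay hg))

end Closure

lemma clm_apply {E F : Type*} [NormedAddCommGroup E] [NormedSpace ℝ E] [NormedAddCommGroup F]
    [NormedSpace ℝ F] {A : ℤ → E →L[ℝ] F} {y : ℤ → E} (hA : DiscreteAlmostPeriodic A)
    (hy : DiscreteAlmostPeriodic y) : DiscreteAlmostPeriodic fun t => A t (y t) := by
  obtain ⟨C, hC⟩ := hA.exists_norm_le
  have hlip (t : ℤ) : LipschitzWith C.toNNReal (A t) :=
    (A t).lipschitz.weaken (NNReal.le_toNNReal_of_coe_le (hC t))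
  exact comp_of_lipschitzWith hlip
    (fun u => uniformContinuous_comp (ContinuousLinearMap.apply ℝ F u).uniformContinuous hA) hy

end DiscreteAlmostPeriodic

section FixedPoint

/-- If the Lipschitz constant is at least `1`, the hypothesis `‖T 0‖ + K * M ≤ M` forces `T 0 = 0`,
so `0` is the fixed point; otherwise `T` is a contraction. -/
lemma exists_fixedPoint_norm_le_of_lipschitzWith {X : Type*} [NormedAddCommGroup X]
    [CompleteSpace X] {T : X → X} {K : ℝ≥0} (hT : LipschitzWith K T) {M : ℝ} (hM : 0 ≤ M)
    (hTM : ‖T 0‖ + K * M ≤ M) : ∃ x, ‖x‖ ≤ M ∧ T x = x := by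
  rcases lt_or_ge K 1 with hK | hK
  · have hcontr : ContractingWith K T := ⟨hK, hT⟩
    obtain ⟨x, hx⟩ : ∃ x, T x = x := ⟨_, hcontr.fixedPoint_isFixedPt⟩
    have hx_norm : ‖x‖ ≤ K * ‖x‖ + ‖T 0‖ := by
      have := hT.dist_le_mul x 0
      rw [hx, dist_eq_norm, dist_zero_right] at this
      exact (norm_le_norm_sub_add x (T 0)).trans (by gcongr)
    have hK' : (0 : ℝ) < 1 - K := sub_pos.2 (by exact_mod_cast hK)
    exact ⟨x, le_of_mul_le_mul_left (by linarith) hK', hx⟩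
  · have hKM : M ≤ K * M := le_mul_of_one_le_left hM (by exact_mod_cast hK)
    exact ⟨0, by simpa using hM, norm_le_zero_iff.1 (by linarith)⟩

/-- The space `𝒜𝒫(E)` of discrete almost periodic functions with the sup norm. -/
def almostPeriodicFunctions (E : Type*) [NormedAddCommGroup E] : AddSubgroup (ℤ →ᵇ E) where
  carrier := {f | DiscreteAlmostPeriodic f}
  zero_mem' := DiscreteAlmostPeriodic.const 0
  add_mem' := DiscreteAlmostPeriodic.add
  neg_mem' := DiscreteAlmostPeriodic.neg

variable {E : Type*} [NormedAddCommGroup E]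

lemma isClosed_almostPeriodicFunctions :
    IsClosed (almostPeriodicFunctions E : Set (ℤ →ᵇ E)) := by
  refine isClosed_of_closure_subset fun f hf => DiscreteAlmostPeriodic.of_uniform_approx ?_
  intro ε hε
  obtain ⟨k, hk, hfk⟩ := Metric.mem_closure_iff.1 hf ε hε
  refine ⟨k, hk, fun t => ?_⟩
  rw [← dist_eq_norm]
  exact (BoundedContinuousFunction.dist_coe_le_dist t).trans_lt hfk

instance [CompleteSpace E] : CompleteSpace (almostPeriodicFunctions E) :=
  isClosed_almostPeriodicFunctions.completeSpace_coe

/-- A discrete almost periodic function as an element of `𝒜𝒫(E)`. -/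
noncomputable def DiscreteAlmostPeriodic.toBCF {f : ℤ → E} (hf : DiscreteAlmostPeriodic f) :
    almostPeriodicFunctions E :=
  ⟨.ofNormedAddCommGroupDiscrete f hf.exists_norm_le.choose hf.exists_norm_le.choose_spec, hf⟩

lemma exists_almostPeriodic_fixedPoint [CompleteSpace E] {T : (ℤ → E) → ℤ → E} {K b M : ℝ}
    (hK : 0 ≤ K) (hT : ∀ x, DiscreteAlmostPeriodic x → DiscreteAlmostPeriodic (T x))
    (hT_lip : ∀ x y, DiscreteAlmostPeriodic x → DiscreteAlmostPeriodic y →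
      ∀ d, (∀ t, ‖x t - y t‖ ≤ d) → ∀ t, ‖T x t - T y t‖ ≤ K * d)
    (hT_zero : ∀ t, ‖T 0 t‖ ≤ b) (hM : 0 ≤ M) (hbM : b + K * M ≤ M) :
    ∃ x, DiscreteAlmostPeriodic x ∧ (∀ t, ‖x t‖ ≤ M) ∧ T x = x := by
  let S : almostPeriodicFunctions E → almostPeriodicFunctions E := fun x => (hT x.1 x.2).toBCF
  have hS_lip : LipschitzWith K.toNNReal S := .of_dist_le' fun x y =>
    (BoundedContinuousFunction.dist_le (by positivity)).2 fun t => by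
      rw [dist_eq_norm]
      refine hT_lip x.1 y.1 x.2 y.2 _ (fun s => ?_) t
      rw [← dist_eq_norm]
      exact BoundedContinuousFunction.dist_coe_le_dist s
  have hS_zero : ‖S 0‖ ≤ b :=
    (BoundedContinuousFunction.norm_le ((norm_nonneg _).trans (hT_zero 0))).2 hT_zero
  obtain ⟨x, hxM, hx⟩ := exists_fixedPoint_norm_le_of_lipschitzWith hS_lip hM
    (by rw [Real.coe_toNNReal K hK]; linarith)
  refine ⟨x.1, x.2, fun t => (x.1.norm_coe_le_norm t).trans hxM, funext fun t => ?_⟩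
  exact congrArg (fun y : almostPeriodicFunctions E => y.1 t) hx

end FixedPoint

section Green

variable {E : Type*} [NormedAddCommGroup E] [NormedSpace ℝ E]

/-- The system `x (t + 1) = A t (x t)` admits an exponential dichotomy with Green kernels `U` and
`V`. When `X` is a fundamental solution, `U t s = X t * P * (X s)⁻¹` and
`V t s = X t * (1 - P) * (X s)⁻¹`. The identities are required only where the kernels enter the
Green operator (`s ≤ t` for `U`, `t ≤ s` for `V`), so that `A t` need not be invertible. -/
structure ExponentialDichotomy (A : ℤ → E →L[ℝ] E) (U V : ℤ → ℤ → E →L[ℝ] E)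
    (α₁ α₂ β₁ β₂ : ℝ) : Prop where
  stable_exponent_pos : 0 < α₁
  unstable_exponent_pos : 0 < α₂
  add_eq_one : ∀ t, U t t + V t t = 1
  stable_succ : ∀ ⦃s t⦄, s ≤ t → U (t + 1) s = A t * U t s
  stable_mul : ∀ ⦃s t⦄, s < t → U t (s + 1) * A s = U t s
  unstable_succ : ∀ ⦃s t⦄, t < s → V (t + 1) s = A t * V t s
  unstable_mul : ∀ ⦃s t⦄, t ≤ s → V t (s + 1) * A s = V t s
  norm_stable_le : ∀ ⦃s t⦄, s ≤ t → ‖U t s‖ ≤ β₁ * (1 + α₁) ^ (s - t)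
  norm_unstable_le : ∀ ⦃s t⦄, t ≤ s → ‖V t s‖ ≤ β₂ * (1 + α₂) ^ (t - s)

lemma ExponentialDichotomy.of_fundamentalSolution {A X Xinv : ℤ → E →L[ℝ] E} {P : E →L[ℝ] E}
    {α₁ α₂ β₁ β₂ : ℝ} (hX : ∀ t, X (t + 1) = A t * X t) (hXinv : ∀ t, X t * Xinv t = 1)
    (hXinv' : ∀ t, Xinv t * X t = 1) (hα₁ : 0 < α₁) (hα₂ : 0 < α₂)
    (hP : ∀ s t, s ≤ t → ‖X t * P * Xinv s‖ ≤ β₁ * (1 + α₁) ^ (s - t))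
    (hP' : ∀ s t, t ≤ s → ‖X t * (1 - P) * Xinv s‖ ≤ β₂ * (1 + α₂) ^ (t - s)) :
    ExponentialDichotomy A (fun t s => X t * P * Xinv s) (fun t s => X t * (1 - P) * Xinv s)
      α₁ α₂ β₁ β₂ := by
  have hXinv_succ (s : ℤ) : Xinv (s + 1) * A s = Xinv s := calc
    Xinv (s + 1) * A s = Xinv (s + 1) * (A s * X s) * Xinv s := by
      rw [mul_assoc, mul_assoc, hXinv, mul_one]
    _ = Xinv s := by rw [← hX, hXinv', one_mul]
  exact {
    stable_exponent_pos := hα₁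
    unstable_exponent_pos := hα₂
    add_eq_one := fun t => by rw [← add_mul, ← mul_add, add_sub_cancel, mul_one, hXinv]
    stable_succ := fun s t _ => by simp only [hX, mul_assoc]
    stable_mul := fun s t _ => by rw [mul_assoc, hXinv_succ]
    unstable_succ := fun s t _ => by simp only [hX, mul_assoc]
    unstable_mul := fun s t _ => by rw [mul_assoc, hXinv_succ]
    norm_stable_le := fun s t => hP s t
    norm_unstable_le := fun s t => hP' s t }

/-- `∑ U(t, j + 1) h(j)` over `j < t`, reindexed by `j = t - 1 - m`. -/
noncomputable def stableConvolution (U : ℤ → ℤ → E →L[ℝ] E) (h : ℤ → E) (t : ℤ) : E :=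
  ∑' m : ℕ, U t (t - m) (h (t - 1 - m))

/-- `∑ V(t, j + 1) h(j)` over `j ≥ t`, reindexed by `j = t + m`. -/
noncomputable def unstableConvolution (V : ℤ → ℤ → E →L[ℝ] E) (h : ℤ → E) (t : ℤ) : E :=
  ∑' m : ℕ, V t (t + m + 1) (h (t + m))

/-- The operator sending a bounded forcing term `h` to the bounded solution of
`w (t + 1) = A t (w t) + h t`, when `U` and `V` are the Green kernels of a dichotomy for `A`. -/
noncomputable def greenOperator (U V : ℤ → ℤ → E →L[ℝ] E) (h : ℤ → E) (t : ℤ) : E :=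
  stableConvolution U h t - unstableConvolution V h t

section Kernel

variable {K : ℕ → E →L[ℝ] E} {κ : ℕ → ℝ} {k : ℕ → E} {C : ℝ}

lemma norm_clm_apply_le_mul (hK : ∀ m, ‖K m‖ ≤ κ m) (hk : ∀ m, ‖k m‖ ≤ C) (m : ℕ) :
    ‖K m (k m)‖ ≤ κ m * C :=
  (K m).le_of_opNorm_le_of_le (hK m) (hk m)

lemma summable_clm_apply_of_bounded [CompleteSpace E] (hK : ∀ m, ‖K m‖ ≤ κ m) (hκ : Summable κ)
    (hk : ∀ m, ‖k m‖ ≤ C) : Summable fun m => K m (k m) :=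
  .of_norm_bounded (hκ.mul_right C) (norm_clm_apply_le_mul hK hk)

lemma norm_tsum_clm_apply_le {S : ℝ} (hK : ∀ m, ‖K m‖ ≤ κ m) (hκ : HasSum κ S)
    (hk : ∀ m, ‖k m‖ ≤ C) : ‖∑' m, K m (k m)‖ ≤ S * C :=
  tsum_of_norm_bounded (hκ.mul_right C) (norm_clm_apply_le_mul hK hk)

end Kernel

lemma hasSum_inv_one_add_pow {α : ℝ} (hα : 0 < α) :
    HasSum (fun m : ℕ => (1 + α)⁻¹ ^ m) ((1 + α) / α) := by
  have hlt : (1 + α)⁻¹ < 1 := inv_lt_one_of_one_lt₀ (lt_add_of_pos_right 1 hα)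
  have hsum : (1 - (1 + α)⁻¹)⁻¹ = (1 + α) / α := by
    rw [← inv_div]
    congr 1
    field_simp
    ring
  exact hsum ▸ hasSum_geometric_of_lt_one (by positivity) hlt

lemma hasSum_inv_one_add_pow_succ {α : ℝ} (hα : 0 < α) :
    HasSum (fun m : ℕ => (1 + α)⁻¹ ^ (m + 1)) (1 / α) := by
  have hsum : (1 + α)⁻¹ * ((1 + α) / α) = 1 / α := by field_simp
  simpa only [pow_succ', hsum] using (hasSum_inv_one_add_pow hα).mul_left (1 + α)⁻¹

namespace ExponentialDichotomy

variable {A : ℤ → E →L[ℝ] E} {U V : ℤ → ℤ → E →L[ℝ] E} {α₁ α₂ β₁ β₂ : ℝ}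

section Kernels

variable (hD : ExponentialDichotomy A U V α₁ α₂ β₁ β₂)
include hD

lemma norm_stable_sub_le (t : ℤ) (m : ℕ) : ‖U t (t - m)‖ ≤ β₁ * (1 + α₁)⁻¹ ^ m := by
  simpa using hD.norm_stable_le (show t - m ≤ t by omega)

lemma norm_unstable_add_le (t : ℤ) (m : ℕ) : ‖V t (t + m)‖ ≤ β₂ * (1 + α₂)⁻¹ ^ m := by
  simpa using hD.norm_unstable_le (show t ≤ t + m by omega)

lemma hasSum_stable_bound : HasSum (fun m : ℕ => β₁ * (1 + α₁)⁻¹ ^ m) (β₁ * (1 + α₁) / α₁) :=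
  mul_div_assoc β₁ (1 + α₁) α₁ ▸ (hasSum_inv_one_add_pow hD.stable_exponent_pos).mul_left β₁

lemma hasSum_unstable_bound : HasSum (fun m : ℕ => β₂ * (1 + α₂)⁻¹ ^ (m + 1)) (β₂ / α₂) :=
  mul_one_div β₂ α₂ ▸ (hasSum_inv_one_add_pow_succ hD.unstable_exponent_pos).mul_left β₂

lemma norm_unstable_add_succ_le (t : ℤ) (m : ℕ) :
    ‖V t (t + m + 1)‖ ≤ β₂ * (1 + α₂)⁻¹ ^ (m + 1) := by
  simpa [add_assoc] using hD.norm_unstable_add_le t (m + 1)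

lemma greenConstant_nonneg : 0 ≤ β₁ * (1 + α₁) / α₁ + β₂ / α₂ :=
  add_nonneg
    (hD.hasSum_stable_bound.nonneg fun m => (norm_nonneg _).trans (hD.norm_stable_sub_le 0 m))
    (hD.hasSum_unstable_bound.nonneg fun m =>
      (norm_nonneg _).trans (hD.norm_unstable_add_succ_le 0 m))

lemma norm_greenOperator_le {h : ℤ → E} {C : ℝ} (hC : ∀ t, ‖h t‖ ≤ C) (t : ℤ) :
    ‖greenOperator U V h t‖ ≤ (β₁ * (1 + α₁) / α₁ + β₂ / α₂) * C := calc
  ‖greenOperator U V h t‖ ≤ ‖stableConvolution U h t‖ + ‖unstableConvolution V h t‖ :=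
    norm_sub_le _ _
  _ ≤ β₁ * (1 + α₁) / α₁ * C + β₂ / α₂ * C :=
    add_le_add
      (norm_tsum_clm_apply_le (hD.norm_stable_sub_le t) hD.hasSum_stable_bound fun _ => hC _)
      (norm_tsum_clm_apply_le (hD.norm_unstable_add_succ_le t) hD.hasSum_unstable_bound
        fun _ => hC _)
  _ = _ := (add_mul ..).symm

lemma stable_apply_eq {y : ℤ → E} (hy : ∀ t, y (t + 1) = A t (y t)) (t : ℤ) (m : ℕ) :
    U t (t - m) (y (t - m)) = U t t (y t) := by
  induction m with
  | zero => simp only [Nat.cast_zero, sub_zero]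
  | succ m ih =>
    rw [← ih, ← hD.stable_mul (show t - (m + 1 : ℕ) < t by omega), mul_apply_eq_comp,
      ← hy, show t - (m + 1 : ℕ) + 1 = t - m by push_cast; ring]

lemma unstable_apply_eq {y : ℤ → E} (hy : ∀ t, y (t + 1) = A t (y t)) (t : ℤ) (m : ℕ) :
    V t (t + m) (y (t + m)) = V t t (y t) := by
  induction m with
  | zero => simp only [Nat.cast_zero, add_zero]
  | succ m ih =>
    rw [← ih, ← hD.unstable_mul (show t ≤ t + m by omega), mul_apply_eq_comp, ← hy,
      Nat.cast_succ, add_assoc]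

-- The stable part is carried back to `-∞` and the unstable part to `+∞`, where both vanish.
lemma eq_zero_of_bounded {y : ℤ → E} (hy : ∀ t, y (t + 1) = A t (y t)) {C : ℝ}
    (hC : ∀ t, ‖y t‖ ≤ C) (t : ℤ) : y t = 0 := by
  have htendsto {α : ℝ} (hα : 0 < α) (β : ℝ) :
      Tendsto (fun m : ℕ => β * (1 + α)⁻¹ ^ m * C) atTop (𝓝 0) := by
    simpa using ((hasSum_inv_one_add_pow hα).summable.tendsto_atTop_zero.const_mul β).mul_const C
  have hU : U t t (y t) = 0 := norm_le_zero_iff.1 <|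
    ge_of_tendsto' (htendsto hD.stable_exponent_pos β₁) fun m => hD.stable_apply_eq hy t m ▸
      norm_clm_apply_le_mul (hD.norm_stable_sub_le t) (fun _ => hC _) m
  have hV : V t t (y t) = 0 := norm_le_zero_iff.1 <|
    ge_of_tendsto' (htendsto hD.unstable_exponent_pos β₂) fun m => hD.unstable_apply_eq hy t m ▸
      norm_clm_apply_le_mul (hD.norm_unstable_add_le t) (fun _ => hC _) m
  calc y t = (U t t + V t t) (y t) := by rw [hD.add_eq_one, one_apply_eq_self]
    _ = 0 := by rw [add_apply, hU, hV, add_zero]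

end Kernels

variable [CompleteSpace E] (hD : ExponentialDichotomy A U V α₁ α₂ β₁ β₂) {h : ℤ → E} {C : ℝ}
include hD

lemma summable_stable (hC : ∀ t, ‖h t‖ ≤ C) (t : ℤ) :
    Summable fun m : ℕ => U t (t - m) (h (t - 1 - m)) :=
  summable_clm_apply_of_bounded (hD.norm_stable_sub_le t) hD.hasSum_stable_bound.summable
    fun _ => hC _

lemma summable_unstable (hC : ∀ t, ‖h t‖ ≤ C) (t : ℤ) :
    Summable fun m : ℕ => V t (t + m + 1) (h (t + m)) :=
  summable_clm_apply_of_bounded (hD.norm_unstable_add_succ_le t) hD.hasSum_unstable_bound.summable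
    fun _ => hC _

lemma greenOperator_sub {k : ℤ → E} {C' : ℝ} (hC : ∀ t, ‖h t‖ ≤ C) (hC' : ∀ t, ‖k t‖ ≤ C')
    (t : ℤ) : greenOperator U V h t - greenOperator U V k t =
      greenOperator U V (fun s => h s - k s) t := by
  simp only [greenOperator, stableConvolution, unstableConvolution, map_sub]
  rw [(hD.summable_stable hC t).tsum_sub (hD.summable_stable hC' t),
    (hD.summable_unstable hC t).tsum_sub (hD.summable_unstable hC' t), sub_sub_sub_comm]

lemma stableConvolution_succ (hC : ∀ t, ‖h t‖ ≤ C) (t : ℤ) :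
    stableConvolution U h (t + 1) = U (t + 1) (t + 1) (h t) + A t (stableConvolution U h t) := by
  rw [stableConvolution, (hD.summable_stable hC (t + 1)).tsum_eq_zero_add, stableConvolution,
    (A t).map_tsum (hD.summable_stable hC t)]
  congr 1
  · simp only [Nat.cast_zero, sub_zero, add_sub_cancel_right]
  · refine tsum_congr fun m => ?_
    rw [show t + 1 - (m + 1 : ℕ) = t - m by push_cast; ring,
      show t + 1 - 1 - (m + 1 : ℕ) = t - 1 - m by push_cast; ring,
      hD.stable_succ (show t - m ≤ t by omega), mul_apply_eq_comp]

lemma unstableConvolution_succ (hC : ∀ t, ‖h t‖ ≤ C) (t : ℤ) :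
    unstableConvolution V h (t + 1) =
      A t (unstableConvolution V h t) - V (t + 1) (t + 1) (h t) := by
  rw [eq_sub_iff_add_eq', unstableConvolution, unstableConvolution,
    (A t).map_tsum (hD.summable_unstable hC t),
    ((hD.summable_unstable hC t).mapL (A t)).tsum_eq_zero_add]
  congr 1
  · rw [Nat.cast_zero, add_zero, hD.unstable_succ (lt_add_one t), mul_apply_eq_comp]
  · refine tsum_congr fun m => ?_
    rw [show t + (m + 1 : ℕ) = t + 1 + m by push_cast; ring,
      hD.unstable_succ (show t < t + 1 + m + 1 by omega), mul_apply_eq_comp]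

lemma greenOperator_succ (hC : ∀ t, ‖h t‖ ≤ C) (t : ℤ) :
    greenOperator U V h (t + 1) = A t (greenOperator U V h t) + h t := by
  have hsplit : U (t + 1) (t + 1) (h t) + V (t + 1) (t + 1) (h t) = h t := by
    rw [← add_apply, hD.add_eq_one, one_apply_eq_self]
  rw [greenOperator, hD.stableConvolution_succ hC, hD.unstableConvolution_succ hC, greenOperator,
    map_sub]
  nth_rw 3 [← hsplit]
  abel

lemma eq_greenOperator {y : ℤ → E} {C' : ℝ} (hC : ∀ t, ‖h t‖ ≤ C)
    (hy : ∀ t, y (t + 1) = A t (y t) + h t) (hC' : ∀ t, ‖y t‖ ≤ C') (t : ℤ) :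
    y t = greenOperator U V h t := by
  have hdiff (t : ℤ) : y (t + 1) - greenOperator U V h (t + 1) =
      A t (y t - greenOperator U V h t) := by
    rw [hy, hD.greenOperator_succ hC, map_sub, add_sub_add_right_eq_sub]
  exact sub_eq_zero.1 <| hD.eq_zero_of_bounded hdiff
    (fun t => norm_sub_le_of_le (hC' t) (hD.norm_greenOperator_le hC t)) t

-- The difference `w (t + τ) - w t` of two bounded solutions is again one, with forcing
-- `(A (t + τ) - A t) (w (t + τ)) + (h (t + τ) - h t)`.
lemma greenOperator_almostPeriodic (hA : DiscreteAlmostPeriodic A)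
    (hh : DiscreteAlmostPeriodic h) : DiscreteAlmostPeriodic (greenOperator U V h) := by
  obtain ⟨C, hC⟩ := hh.exists_norm_le
  set w := greenOperator U V h with hw
  set γ := β₁ * (1 + α₁) / α₁ + β₂ / α₂
  have hγ_nonneg : 0 ≤ γ := hD.greenConstant_nonneg
  have hw_norm (t : ℤ) : ‖w t‖ ≤ γ * C := hD.norm_greenOperator_le hC t
  have hC_nonneg : 0 ≤ C := (norm_nonneg _).trans (hC 0)
  intro ε hε
  obtain ⟨δ, hδ, hδε⟩ : ∃ δ > 0, γ * (δ * (γ * C) + δ) < ε := by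
    refine ⟨ε / (γ * (γ * C + 1) + 1), by positivity, ?_⟩
    calc _ = γ * (γ * C + 1) / (γ * (γ * C + 1) + 1) * ε := by ring
      _ < ε := mul_lt_of_lt_one_left hε ((div_lt_one (by positivity)).2 (lt_add_one _))
  refine (hA.isRelativelyDense_inter hh hδ).mono ?_
  rintro τ ⟨hτA, hτh⟩ t
  let k : ℤ → E := fun s => (A (s + τ) - A s) (w (s + τ)) + (h (s + τ) - h s)
  have hk_norm (s : ℤ) : ‖k s‖ ≤ δ * (γ * C) + δ := norm_add_le_of_le
    ((A (s + τ) - A s).le_of_opNorm_le_of_le (hτA s).le (hw_norm _)) (hτh s).le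
  have hk_sol (s : ℤ) : w (s + 1 + τ) - w (s + 1) = A s (w (s + τ) - w s) + k s := by
    rw [add_right_comm, hw, hD.greenOperator_succ hC, hD.greenOperator_succ hC, ← hw]
    simp only [k, map_sub, sub_apply]
    abel
  have hdiff : w (t + τ) - w t = greenOperator U V k t := hD.eq_greenOperator
    (y := fun s => w (s + τ) - w s) hk_norm hk_sol
    (fun s => norm_sub_le_of_le (hw_norm (s + τ)) (hw_norm s)) t
  rw [hdiff]
  exact (hD.norm_greenOperator_le hk_norm t).trans_lt hδε

end ExponentialDichotomy

end Green

section NeutralSystem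

variable {E : Type*} [NormedAddCommGroup E] [NormedSpace ℝ E]

/-- The function `Λ(·, x)` for a system on a normed space `E`. If `x` solves the neutral system,
it is the forcing term of the linear system solved by `x t - Q t (x (t - g t))`. -/
def neutralForcing (A : ℤ → E →L[ℝ] E) (g : ℤ → ℤ) (Q : ℤ → E → E) (G : ℤ → E → E → E)
    (x : ℤ → E) (j : ℤ) : E :=
  (A j - 1) (Q j (x (j - g j))) + G j (x j) (x (j - g j))

/-- The operator whose bounded fixed points are the bounded solutions of the neutral system, for
Green kernels `U` and `V` of `A`. -/
noncomputable def neutralMap (U V : ℤ → ℤ → E →L[ℝ] E) (A : ℤ → E →L[ℝ] E) (g : ℤ → ℤ)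
    (Q : ℤ → E → E) (G : ℤ → E → E → E) (x : ℤ → E) (t : ℤ) : E :=
  Q t (x (t - g t)) + greenOperator U V (neutralForcing A g Q G x) t

variable {A : ℤ → E →L[ℝ] E} {g : ℤ → ℤ} {Q : ℤ → E → E} {G : ℤ → E → E → E} {E₁ E₂ : ℝ}
  {x y : ℤ → E}

lemma neutralForcing_almostPeriodic (hA : DiscreteAlmostPeriodic A)
    (hq : DiscreteAlmostPeriodic fun t => Q t (x (t - g t)))
    (hG : DiscreteAlmostPeriodic fun t => G t (x t) (x (t - g t))) :
    DiscreteAlmostPeriodic (neutralForcing A g Q G x) :=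
  ((hA.sub (.const 1)).clm_apply hq).add hG

lemma norm_sub_one_apply_le {L : E →L[ℝ] E} {N c : ℝ} (hL : ‖L‖ ≤ N) {v : E} (hv : ‖v‖ ≤ c) :
    ‖(L - 1) v‖ ≤ (N + 1) * c :=
  (L - 1).le_of_opNorm_le_of_le (norm_sub_le_of_le hL ContinuousLinearMap.norm_id_le) hv

lemma norm_neutralForcing_sub_le {N d : ℝ} (hA : ∀ t, ‖A t‖ ≤ N) (hE₁ : 0 ≤ E₁) (hE₂ : 0 ≤ E₂)
    (hQ_lip : ∀ t u v, ‖Q t u - Q t v‖ ≤ E₁ * ‖u - v‖)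
    (hG_lip : ∀ t u v w z, ‖G t u w - G t v z‖ ≤ E₂ * (‖u - v‖ + ‖w - z‖))
    (hd : ∀ t, ‖x t - y t‖ ≤ d) (t : ℤ) :
    ‖neutralForcing A g Q G x t - neutralForcing A g Q G y t‖ ≤ ((N + 1) * E₁ + 2 * E₂) * d := by
  have hQ : ‖Q t (x (t - g t)) - Q t (y (t - g t))‖ ≤ E₁ * d :=
    (hQ_lip _ _ _).trans (by gcongr; exact hd _)
  have hG : ‖G t (x t) (x (t - g t)) - G t (y t) (y (t - g t))‖ ≤ E₂ * (d + d) :=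
    (hG_lip _ _ _ _ _).trans (by gcongr <;> exact hd _)
  rw [neutralForcing, neutralForcing, add_sub_add_comm, ← map_sub]
  calc _ ≤ (N + 1) * (E₁ * d) + E₂ * (d + d) :=
        norm_add_le_of_le (norm_sub_one_apply_le (hA t) hQ) hG
    _ = _ := by ring

lemma norm_neutralForcing_zero_le {N a b : ℝ} (hA : ∀ t, ‖A t‖ ≤ N) (hQ : ∀ t, ‖Q t 0‖ ≤ b)
    (hG : ∀ t, ‖G t 0 0‖ ≤ a) (t : ℤ) : ‖neutralForcing A g Q G 0 t‖ ≤ (N + 1) * b + a :=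
  norm_add_le_of_le (norm_sub_one_apply_le (hA t) (hQ t)) (hG t)

variable {U V : ℤ → ℤ → E →L[ℝ] E} {α₁ α₂ β₁ β₂ : ℝ} [CompleteSpace E]

-- `z t = x t - Q t (x (t - g t))` satisfies `z (t + 1) = A t (z t) + Λ(t, x)`.
lemma ExponentialDichotomy.neutral_eq_of_fixedPoint
    (hD : ExponentialDichotomy A U V α₁ α₂ β₁ β₂) {C : ℝ}
    (hC : ∀ t, ‖neutralForcing A g Q G x t‖ ≤ C) (hx : neutralMap U V A g Q G x = x) (t : ℤ) :
    x (t + 1) = A t (x t) + (Q (t + 1) (x (t + 1 - g (t + 1))) - Q t (x (t - g t)))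
      + G t (x t) (x (t - g t)) := by
  have hz (t : ℤ) : greenOperator U V (neutralForcing A g Q G x) t = x t - Q t (x (t - g t)) :=
    eq_sub_of_add_eq' (congrFun hx t)
  have hz_succ := hD.greenOperator_succ hC t
  rw [hz, hz, sub_eq_iff_eq_add] at hz_succ
  rw [hz_succ, neutralForcing]
  simp only [map_sub, sub_apply, one_apply_eq_self]
  abel

lemma ExponentialDichotomy.norm_neutralMap_sub_le (hD : ExponentialDichotomy A U V α₁ α₂ β₁ β₂)
    {N d C C' : ℝ} (hA : ∀ t, ‖A t‖ ≤ N) (hE₁ : 0 ≤ E₁) (hE₂ : 0 ≤ E₂)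
    (hQ_lip : ∀ t u v, ‖Q t u - Q t v‖ ≤ E₁ * ‖u - v‖)
    (hG_lip : ∀ t u v w z, ‖G t u w - G t v z‖ ≤ E₂ * (‖u - v‖ + ‖w - z‖))
    (hx : ∀ t, ‖neutralForcing A g Q G x t‖ ≤ C) (hy : ∀ t, ‖neutralForcing A g Q G y t‖ ≤ C')
    (hd : ∀ t, ‖x t - y t‖ ≤ d) (t : ℤ) :
    ‖neutralMap U V A g Q G x t - neutralMap U V A g Q G y t‖ ≤
      (E₁ + (β₁ * (1 + α₁) / α₁ + β₂ / α₂) * ((N + 1) * E₁ + 2 * E₂)) * d := by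
  have hQ : ‖Q t (x (t - g t)) - Q t (y (t - g t))‖ ≤ E₁ * d :=
    (hQ_lip _ _ _).trans (by gcongr; exact hd _)
  have hgreen := hD.norm_greenOperator_le
    (norm_neutralForcing_sub_le (g := g) hA hE₁ hE₂ hQ_lip hG_lip hd) t
  rw [← hD.greenOperator_sub hx hy] at hgreen
  rw [neutralMap, neutralMap, add_sub_add_comm]
  exact (norm_add_le_of_le hQ hgreen).trans_eq (by ring)

theorem stmt_14_general (hD : ExponentialDichotomy A U V α₁ α₂ β₁ β₂)
    (hA_ap : DiscreteAlmostPeriodic A) (hg_ap : DiscreteAlmostPeriodic g)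
    (hQ_ap : ∀ u, DiscreteAlmostPeriodic fun t => Q t u)
    (hG_ap : ∀ u v, DiscreteAlmostPeriodic fun t => G t u v) (hE₁ : 0 ≤ E₁) (hE₂ : 0 ≤ E₂)
    (hQ_lip : ∀ t u v, ‖Q t u - Q t v‖ ≤ E₁ * ‖u - v‖)
    (hG_lip : ∀ t u v w z, ‖G t u w - G t v z‖ ≤ E₂ * (‖u - v‖ + ‖w - z‖))
    {M₀ : ℝ} (hM₀ : 0 ≤ M₀)
    (hineq : E₁ * M₀ + (⨆ t, ‖Q t 0‖)
      + (((⨆ t, ‖A t‖) + 1) * (E₁ * M₀ + (⨆ t, ‖Q t 0‖)) + 2 * E₂ * M₀ + (⨆ t, ‖G t 0 0‖))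
        * (β₁ * (1 + α₁) / α₁ + β₂ / α₂) ≤ M₀) :
    ∃ x : ℤ → E, DiscreteAlmostPeriodic x ∧ (∀ t, ‖x t‖ ≤ M₀) ∧
      (∀ t, x t = Q t (x (t - g t))
        + (∑' m : ℕ, U t (t - m) (neutralForcing A g Q G x (t - 1 - m)))
        - ∑' m : ℕ, V t (t + m + 1) (neutralForcing A g Q G x (t + m))) ∧
      ∀ t, x (t + 1) = A t (x t) + (Q (t + 1) (x (t + 1 - g (t + 1))) - Q t (x (t - g t)))
        + G t (x t) (x (t - g t)) := by
  have hN := le_ciSup hA_ap.bddAbove_range_norm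
  have hb := le_ciSup (hQ_ap 0).bddAbove_range_norm
  have ha := le_ciSup (hG_ap 0 0).bddAbove_range_norm
  have hN_nonneg := (norm_nonneg _).trans (hN 0)
  have hγ := hD.greenConstant_nonneg
  have hforcing {x : ℤ → E} (hx : DiscreteAlmostPeriodic x) :=
    neutralForcing_almostPeriodic hA_ap (hx.comp_delay hg_ap hQ_ap hQ_lip)
      (hx.comp_delay₂ hg_ap hG_ap hE₂ hG_lip)
  have hL : 0 ≤ E₁ + (β₁ * (1 + α₁) / α₁ + β₂ / α₂) * (((⨆ t, ‖A t‖) + 1) * E₁ + 2 * E₂) := by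
    positivity
  obtain ⟨x, hx, hxM, hfix⟩ := exists_almostPeriodic_fixedPoint
    (T := neutralMap U V A g Q G) hL
    (fun x hx => (hx.comp_delay hg_ap hQ_ap hQ_lip).add
      (hD.greenOperator_almostPeriodic hA_ap (hforcing hx)))
    (fun x y hx hy d hd => hD.norm_neutralMap_sub_le hN hE₁ hE₂ hQ_lip hG_lip
      (hforcing hx).exists_norm_le.choose_spec (hforcing hy).exists_norm_le.choose_spec hd)
    (fun t => norm_add_le_of_le (hb t)
      (hD.norm_greenOperator_le (norm_neutralForcing_zero_le hN hb ha) t))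
    hM₀ (hineq.trans' (by linarith))
  refine ⟨x, hx, hxM, fun t => ?_, hD.neutral_eq_of_fixedPoint
    (hforcing hx).exists_norm_le.choose_spec hfix⟩
  exact (congrFun hfix t).symm.trans (add_sub_assoc ..).symm

end NeutralSystem

/-- Under (A1′) and (A2)–(A4) with `E₁ ∈ (0,1)`, setting
`a = sup_t ‖G(t,0,0)‖`, `b = sup_t ‖Q(t,0)‖` and `‖A‖ = sup_t ‖A(t)‖`, if `M₀ > 0`
satisfies `E₁M₀ + b + [(‖A‖+1)(E₁M₀+b) + 2E₂M₀ + a]·[β₁(1+α₁)/α₁ + β₂/α₂] ≤ M₀`, then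
the neutral system has a discrete almost periodic solution `x` with `sup_t ‖x(t)‖ ≤ M₀`
satisfying the fixed point equation
`x(t) = Q(t, x(t−g(t))) + ∑_{j=-∞}^{t−1} X(t)P X(j+1)⁻¹ Λ(j,x)
  − ∑_{j=t}^{∞} X(t)(I−P) X(j+1)⁻¹ Λ(j,x)`
(the sums being reindexed over `ℕ` via `j = t − 1 − m` and `j = t + m`). -/
theorem stmt_14 {n : ℕ}
    (A X Xinv : ℤ → (Fin n → ℝ) →L[ℝ] (Fin n → ℝ)) (t₀ : ℤ)
    (hAbdd : BddAbove (Set.range fun t : ℤ => ‖A t‖))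
    (g : ℤ → ℤ) (hg0 : ∀ t : ℤ, 0 ≤ g t)
    (Q : ℤ → (Fin n → ℝ) → Fin n → ℝ)
    (G : ℤ → (Fin n → ℝ) → (Fin n → ℝ) → Fin n → ℝ)
    (E₁ E₂ : ℝ) (hE₁ : 0 < E₁) (hE₁' : E₁ < 1) (hE₂ : 0 < E₂)
    -- (A1′)
    (hA_ap : DiscreteAlmostPeriodic A)
    (hg_ap : DiscreteAlmostPeriodic g)
    (hQ_ap : ∀ u : Fin n → ℝ, DiscreteAlmostPeriodic fun t => Q t u)
    (hG_ap : ∀ u v : Fin n → ℝ, DiscreteAlmostPeriodic fun t => G t u v)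
    -- (A2)
    (hQ_lip : ∀ (t : ℤ) (u v : Fin n → ℝ), ‖Q t u - Q t v‖ ≤ E₁ * ‖u - v‖)
    -- (A3)
    (hG_lip : ∀ (t : ℤ) (u v w z : Fin n → ℝ),
      ‖G t u w - G t v z‖ ≤ E₂ * (‖u - v‖ + ‖w - z‖))
    -- (A4): exponential dichotomy
    (hX : ∀ t : ℤ, X (t + 1) = A t * X t) (hX0 : X t₀ = 1)
    (hXinv : ∀ t : ℤ, X t * Xinv t = 1) (hXinv' : ∀ t : ℤ, Xinv t * X t = 1)
    (P : (Fin n → ℝ) →L[ℝ] (Fin n → ℝ)) (hP : P * P = P)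
    (α₁ α₂ β₁ β₂ : ℝ) (hα₁ : 0 < α₁) (hα₂ : 0 < α₂) (hβ₁ : 0 < β₁) (hβ₂ : 0 < β₂)
    (hd₁ : ∀ s t : ℤ, s ≤ t → ‖X t * P * Xinv s‖ ≤ β₁ * (1 + α₁) ^ (s - t))
    (hd₂ : ∀ s t : ℤ, t ≤ s → ‖X t * (1 - P) * Xinv s‖ ≤ β₂ * (1 + α₂) ^ (t - s))
    (M₀ : ℝ) (hM₀ : 0 < M₀)
    (hineq : E₁ * M₀ + (⨆ t : ℤ, ‖Q t 0‖)
      + (((⨆ t : ℤ, ‖A t‖) + 1) * (E₁ * M₀ + (⨆ t : ℤ, ‖Q t 0‖))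
          + 2 * E₂ * M₀ + (⨆ t : ℤ, ‖G t 0 0‖))
        * (β₁ * (1 + α₁) / α₁ + β₂ / α₂) ≤ M₀) :
    ∃ x : ℤ → Fin n → ℝ, DiscreteAlmostPeriodic x ∧ (∀ t : ℤ, ‖x t‖ ≤ M₀) ∧
      ∀ t : ℤ, x t = Q t (x (t - g t))
        + (∑' m : ℕ, (X t * P * Xinv (t - (m : ℤ))) (Lam A g Q G x (t - 1 - (m : ℤ))))
        - ∑' m : ℕ, (X t * (1 - P) * Xinv (t + (m : ℤ) + 1)) (Lam A g Q G x (t + (m : ℤ))) := by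
  have hD := ExponentialDichotomy.of_fundamentalSolution hX hXinv hXinv' hα₁ hα₂ hd₁ hd₂
  obtain ⟨x, hx, hxM, hfix, -⟩ := stmt_14_general hD hA_ap hg_ap hQ_ap hG_ap hE₁.le hE₂.le
    hQ_lip hG_lip hM₀.le hineq
  exact ⟨x, hx, hxM, hfix⟩
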